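/- arXiv:2211.15678 — 2 statements merged into one kernel-verified Lean document; each statement's English description precedes it below -/
import Mathlib

section
/- (Theorem 2, converse direction: one-shot distillation bound) Let ρ be a state on H_in, φ a pure state on H_out, and ε ∈ [0,1). If there exists a linear map Λ ∈ O_μ such that ‖Λ(ρ) − φ‖₁ ≤ ε, then 1/‖φ‖_μ° ≤ inf{d_ħ^ε(ρ‖Z) : Z ∈ T_sa(H_in), ‖Z‖_μ ≤ 1}. -/
/-!
The witness for the hypothesis testing quantity is the adjoint test `Q = Λ†(φ)`, taken with respect
to the Hilbert–Schmidt inner product. A pure state satisfies `0 ≤ φ ≤ 1`, so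
`|⟨φ, X⟩| ≤ ‖X‖₁` (`abs_hip_le_trNorm`). Since `Λ` contracts the trace norm, this makes
`|⟨Q, X⟩| = |⟨φ, Λ X⟩| ≤ ‖X‖₁`; evaluating at the rank-one operators `X = x x*` gives
`-1 ≤ Q ≤ 1` (`loew_of_abs_hip_le`). Moreover `⟨Q, ρ⟩ = ⟨φ, φ⟩ + ⟨φ, Λ ρ - φ⟩ ≥ 1 - ε`, so `Q` is
feasible. Finally `‖Λ Z‖_μ ≤ ‖Z‖_μ ≤ 1` gives `⟨Q, Z⟩ = ⟨φ, Λ Z⟩ ≤ ‖φ‖_μ°`, so the infimum defining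
`d_ħ^ε(ρ‖Z)` is at most `‖φ‖_μ°`; taking inverses yields the bound.
-/

open scoped ComplexOrder
open Filter

noncomputable section

/-- The real vector space of self-adjoint (Hermitian) operators on `ℂ^ι`. -/
abbrev HMat (ι : Type) [Fintype ι] [DecidableEq ι] : Type :=
  selfAdjoint (Matrix ι ι ℂ)

variable {ι κ : Type} [Fintype ι] [DecidableEq ι] [Fintype κ] [DecidableEq κ]

/-- The matrix underlying a self-adjoint operator is Hermitian. -/
def herm (X : HMat ι) : X.1.IsHermitian := X.2

/-- The (real) Hilbert–Schmidt inner product `⟨Q, X⟩ = Tr (Q X)`. -/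
def hip (Q X : HMat ι) : ℝ := (Matrix.trace (Q.1 * X.1)).re

/-- The trace norm of a self-adjoint operator: the sum of absolute values of eigenvalues. -/
def trNorm (X : HMat ι) : ℝ := ∑ i, |(herm X).eigenvalues i|

/-- The operator norm of a self-adjoint operator: the largest absolute value of an eigenvalue. -/
def opNorm (X : HMat ι) : ℝ := ⨆ i, |(herm X).eigenvalues i|

/-- A state: a positive semidefinite operator of unit trace. -/
def IsState (ρ : HMat ι) : Prop := ρ.1.PosSemidef ∧ Matrix.trace ρ.1 = 1

/-- A pure state: a rank-one orthogonal projection. -/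
def IsPureState (φ : HMat ι) : Prop := IsState φ ∧ φ.1 * φ.1 = φ.1

/-- A norm-like function on self-adjoint operators. -/
structure MatNorm (ι : Type) [Fintype ι] [DecidableEq ι] where
  toFun : HMat ι → ℝ
  eq_zero' : ∀ X, toFun X = 0 → X = 0
  smul' : ∀ (t : ℝ) (X), toFun (t • X) = |t| * toFun X
  add_le' : ∀ X Y, toFun (X + Y) ≤ toFun X + toFun Y

/-- A resource norm: a norm with `‖ρ‖ ≥ 1` on every state. -/
structure ResourceNorm (ι : Type) [Fintype ι] [DecidableEq ι] extends MatNorm ι where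
  one_le_state' : ∀ ρ, IsState ρ → 1 ≤ toFun ρ

/-- The dual norm `‖Q‖° = sup {⟨Q, X⟩ : ‖X‖ ≤ 1}`. -/
def dualNormF (ν : HMat ι → ℝ) (Q : HMat ι) : ℝ :=
  sSup {r | ∃ X, ν X ≤ 1 ∧ r = hip Q X}

/-- Membership in the class `O_μ` of maps contracting the trace norm and the resource norms. -/
def MemO (νi : ResourceNorm ι) (νo : ResourceNorm κ) (Λ : HMat ι →ₗ[ℝ] HMat κ) : Prop :=
  (∀ X, trNorm (Λ X) ≤ trNorm X) ∧ (∀ X, νo.toFun (Λ X) ≤ νi.toFun X)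

/-- The trace-norm ε-ball around a state. -/
def ball (ρ : HMat ι) (ε : ℝ) : Set (HMat ι) :=
  {X | trNorm X ≤ 1 ∧ trNorm (X - ρ) ≤ ε}

/-- Loewner order: `A ≤ B` iff `B - A` is positive semidefinite. -/
def loew (A B : Matrix ι ι ℂ) : Prop := (B - A).PosSemidef

/-- The feasible values `⟨Q, Z⟩` entering the emancipated hypothesis testing quantity. -/
def dhSet (ρ Z : HMat ι) (ε : ℝ) : Set ℝ :=
  {r | ∃ Q : HMat ι, loew (-(1 : Matrix ι ι ℂ)) Q.1 ∧ loew Q.1 1 ∧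
        1 - ε ≤ hip Q ρ ∧ r = hip Q Z}

/-- The non-logarithmic emancipated hypothesis testing quantity `d_ħ^ε(ρ‖Z)`,
with value `+∞` when the infimum is `≤ 0`. -/
def dEmanc (ρ Z : HMat ι) (ε : ℝ) : EReal :=
  if 0 < sInf (dhSet ρ Z ε) then (((sInf (dhSet ρ Z ε))⁻¹ : ℝ) : EReal) else ⊤

/-- The emancipated hypothesis testing relative entropy `D_ħ^ε(ρ‖Z)` (base-2 logarithmic form),
with value `+∞` when the infimum is `≤ 0`. -/
def DEmanc (ρ Z : HMat ι) (ε : ℝ) : EReal :=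
  if 0 < sInf (dhSet ρ Z ε) then ((-Real.logb 2 (sInf (dhSet ρ Z ε)) : ℝ) : EReal) else ⊤


/-- The Hilbert–Schmidt inner product as a real bilinear form. -/
def hipForm (ι : Type) [Fintype ι] [DecidableEq ι] : LinearMap.BilinForm ℝ (HMat ι) :=
  LinearMap.mk₂ ℝ hip
    (fun A B C => by simp [hip, add_mul])
    (fun c A B => by simp [hip])
    (fun A B C => by simp [hip, mul_add])
    (fun c A B => by simp [hip])

lemma hipForm_apply (Q X : HMat ι) : hipForm ι Q X = hip Q X := rfl

instance HMat.finiteDimensional : FiniteDimensional ℝ (HMat ι) :=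
  inferInstanceAs (FiniteDimensional ℝ (selfAdjoint.submodule ℝ (Matrix ι ι ℂ)))

lemma hip_comm (Q X : HMat ι) : hip Q X = hip X Q := by
  unfold hip
  rw [Matrix.trace_mul_comm]

lemma eq_zero_of_hip_self (Q : HMat ι) (h : hip Q Q = 0) : Q = 0 := by
  have hps := Matrix.posSemidef_conjTranspose_mul_self Q.1
  have hQ : Q.1.conjTranspose = Q.1 := Q.2
  rw [hQ] at hps
  have him : (Matrix.trace (Q.1 * Q.1)).im = 0 := (Complex.nonneg_iff.mp hps.trace_nonneg).2.symm
  have h0 : Matrix.trace (Q.1.conjTranspose * Q.1) = 0 := by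
    rw [hQ]
    exact Complex.ext h him
  exact Subtype.ext (Matrix.trace_conjTranspose_mul_self_eq_zero_iff.mp h0)

/-- Riesz representation for the Hilbert–Schmidt inner product; it supplies the adjoint of a linear
map on self-adjoint operators. -/
lemma exists_hip_eq (f : HMat ι →ₗ[ℝ] ℝ) : ∃ Q : HMat ι, ∀ X, hip Q X = f X := by
  have hinj : Function.Injective (hipForm ι) := by
    rw [← LinearMap.ker_eq_bot, LinearMap.ker_eq_bot']
    intro Q hQ
    exact eq_zero_of_hip_self Q (by rw [← hipForm_apply, hQ]; rfl)
  have hsurj := (LinearMap.injective_iff_surjective_of_finrank_eq_finrank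
    (Subspace.dual_finrank_eq (K := ℝ) (V := HMat ι)).symm).mp hinj
  obtain ⟨Q, hQ⟩ := hsurj f
  exact ⟨Q, fun X => by rw [← hipForm_apply, hQ]⟩

/-- A projection `φ` is a contraction, so by the duality of operator and trace norms
`|⟨φ, X⟩| ≤ ‖X‖₁`. In an eigenbasis of `X`, `⟨φ, X⟩` is a combination of the eigenvalues whose
weights are the diagonal entries of `φ`, which lie in `[0, 1]`. -/
lemma abs_hip_le_trNorm (φ : HMat ι) (hφ : φ.1 * φ.1 = φ.1) (X : HMat ι) :
    |hip φ X| ≤ trNorm X := by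
  have hφs : φ.1.conjTranspose = φ.1 := φ.2
  have h0 : φ.1.PosSemidef := by
    have := Matrix.posSemidef_conjTranspose_mul_self φ.1
    rwa [hφs, hφ] at this
  have h1 : (1 - φ.1).PosSemidef := by
    have := Matrix.posSemidef_conjTranspose_mul_self (1 - φ.1)
    rwa [Matrix.conjTranspose_sub, hφs, Matrix.conjTranspose_one, sub_mul, mul_sub, mul_sub, hφ,
      one_mul, mul_one, one_mul, sub_self, sub_zero] at this
  set U : Matrix ι ι ℂ := (herm X).eigenvectorUnitary.1 with hU
  have hUU : U.conjTranspose * U = 1 := Unitary.coe_star_mul_self (herm X).eigenvectorUnitary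
  have hX : X.1 = U * Matrix.diagonal (fun i => ((herm X).eigenvalues i : ℂ)) *
      U.conjTranspose := by
    conv_lhs => rw [(herm X).spectral_theorem]
    rfl
  set P : Matrix ι ι ℂ := U.conjTranspose * φ.1 * U with hP
  have hP0 : P.PosSemidef := h0.conjTranspose_mul_mul_same U
  have hP1 : (1 - P).PosSemidef := by
    have := h1.conjTranspose_mul_mul_same U
    rwa [mul_sub, sub_mul, mul_one, hUU] at this
  have hd0 (i : ι) : 0 ≤ (P i i).re := (Complex.nonneg_iff.mp (hP0.diag_nonneg (i := i))).1
  have hd1 (i : ι) : (P i i).re ≤ 1 := by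
    have := (Complex.nonneg_iff.mp (hP1.diag_nonneg (i := i))).1
    simpa using this
  have hsum : hip φ X = ∑ i, (P i i).re * (herm X).eigenvalues i := by
    have : Matrix.trace (φ.1 * X.1) =
        Matrix.trace (P * Matrix.diagonal (fun i => ((herm X).eigenvalues i : ℂ))) := by
      conv_lhs => rw [hX]
      rw [← mul_assoc, Matrix.trace_mul_comm, ← mul_assoc, ← mul_assoc]
    unfold hip
    rw [this]
    simp [Matrix.trace, Matrix.mul_diagonal]
  rw [hsum]
  refine (Finset.abs_sum_le_sum_abs _ _).trans (Finset.sum_le_sum fun i _ => ?_)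
  rw [abs_mul, abs_of_nonneg (hd0 i)]
  exact mul_le_of_le_one_left (abs_nonneg _) (hd1 i)

lemma trNorm_of_posSemidef (X : HMat ι) (hX : X.1.PosSemidef) :
    trNorm X = (Matrix.trace X.1).re := by
  rw [(herm X).trace_eq_sum_eigenvalues]
  simp only [trNorm, Complex.re_sum]
  refine Finset.sum_congr rfl fun i _ => ?_
  rw [abs_of_nonneg (hX.eigenvalues_nonneg i)]
  rfl

/-- The rank-one operator `x x*`. -/
def rankOne (x : ι → ℂ) : HMat ι :=
  ⟨Matrix.vecMulVec x (star x), (Matrix.posSemidef_vecMulVec_self_star x).1⟩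

lemma hip_rankOne (Q : HMat ι) (x : ι → ℂ) :
    hip Q (rankOne x) = (star x ⬝ᵥ Q.1.mulVec x).re := by
  simp [hip, rankOne, Matrix.mul_vecMulVec, Matrix.trace_vecMulVec, dotProduct_comm]

lemma trNorm_rankOne (x : ι → ℂ) : trNorm (rankOne x) = (star x ⬝ᵥ x).re := by
  rw [trNorm_of_posSemidef _ (Matrix.posSemidef_vecMulVec_self_star x)]
  simp [rankOne, Matrix.trace_vecMulVec, dotProduct_comm]

/-- A Hermitian matrix with nonnegative quadratic form is positive semidefinite; over `ℂ` only the
real part has to be controlled. -/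
lemma posSemidef_of_re {M : Matrix ι ι ℂ} (hM : M.IsHermitian)
    (h : ∀ x : ι → ℂ, 0 ≤ (star x ⬝ᵥ M.mulVec x).re) : M.PosSemidef := by
  refine .of_dotProduct_mulVec_nonneg hM fun x => Complex.nonneg_iff.mpr ⟨h x, ?_⟩
  exact (hM.im_star_dotProduct_mulVec_self x).symm

/-- A functional bounded by the trace norm is represented by a contraction. -/
lemma loew_of_abs_hip_le (Q : HMat ι) (h : ∀ X, |hip Q X| ≤ trNorm X) :
    loew (-(1 : Matrix ι ι ℂ)) Q.1 ∧ loew Q.1 1 := by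
  have key (x : ι → ℂ) := abs_le.mp (hip_rankOne Q x ▸ trNorm_rankOne x ▸ h (rankOne x))
  constructor
  · refine posSemidef_of_re ((herm Q).sub Matrix.isHermitian_one.neg) fun x => ?_
    have := (key x).1
    simp only [sub_neg_eq_add, Matrix.add_mulVec, Matrix.one_mulVec, dotProduct_add, Complex.add_re]
    linarith
  · refine posSemidef_of_re (Matrix.isHermitian_one.sub (herm Q)) fun x => ?_
    have := (key x).2
    simp only [Matrix.sub_mulVec, Matrix.one_mulVec, dotProduct_sub, Complex.sub_re]
    linarith

/-- **Theorem 2 (converse direction: one-shot distillation bound).**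
If there exists a map `Λ ∈ O_μ` with `‖Λ(ρ) − φ‖₁ ≤ ε` for a pure state `φ`, then
`1/‖φ‖_μ° ≤ inf {d_ħ^ε(ρ‖Z) : ‖Z‖_μ ≤ 1}`. -/
theorem oneshot_distillation_converse
    {dIn dOut : Type} [Fintype dIn] [DecidableEq dIn] [Fintype dOut] [DecidableEq dOut]
    (νi : ResourceNorm dIn) (νo : ResourceNorm dOut)
    (ρ : HMat dIn) (hρ : IsState ρ)
    (φ : HMat dOut) (hφ : IsPureState φ)
    (ε : ℝ) (hε0 : 0 ≤ ε) (hε1 : ε < 1)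
    (h : ∃ Λ : HMat dIn →ₗ[ℝ] HMat dOut, MemO νi νo Λ ∧ trNorm (Λ ρ - φ) ≤ ε) :
    (((dualNormF νo.toFun φ)⁻¹ : ℝ) : EReal) ≤
      ⨅ Z ∈ {Z : HMat dIn | νi.toFun Z ≤ 1}, dEmanc ρ Z ε := by
  obtain ⟨Λ, ⟨hΛ1, hΛμ⟩, hΛρ⟩ := h
  obtain ⟨Q, hQ⟩ := exists_hip_eq ((hipForm dOut φ).comp Λ)
  replace hQ (X : HMat dIn) : hip Q X = hip φ (Λ X) := hQ X
  have hcontr : ∀ X, |hip Q X| ≤ trNorm X := fun X => by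
    rw [hQ]
    exact (abs_hip_le_trNorm φ hφ.2 _).trans (hΛ1 X)
  obtain ⟨hQ1, hQ2⟩ := loew_of_abs_hip_le Q hcontr
  have hQρ : 1 - ε ≤ hip Q ρ := by
    have hsplit : hip φ (Λ ρ) = hip φ φ + hip φ (Λ ρ - φ) := by
      simp only [← hipForm_apply, map_sub]
      ring
    have hφφ : hip φ φ = 1 := by simp [hip, hφ.2, hφ.1.2]
    have := (abs_le.mp ((abs_hip_le_trNorm φ hφ.2 (Λ ρ - φ)).trans hΛρ)).1
    rw [hQ, hsplit, hφφ]
    linarith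
  refine le_iInf₂ fun Z hZ => ?_
  unfold dEmanc
  split_ifs with hpos
  swap
  · exact le_top
  refine EReal.coe_le_coe_iff.mpr ?_
  -- A positive real `sInf` forces the set to be bounded below, since `sInf` is `0` otherwise.
  have hbdd : BddBelow (dhSet ρ Z ε) := by
    by_contra hb
    rw [Real.sInf_of_not_bddBelow hb] at hpos
    exact lt_irrefl _ hpos
  have hle : sInf (dhSet ρ Z ε) ≤ hip φ (Λ Z) :=
    csInf_le hbdd ⟨Q, hQ1, hQ2, hQρ, (hQ Z).symm⟩
  by_cases hb : BddAbove {r | ∃ X, νo.toFun X ≤ 1 ∧ r = hip φ X}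
  · exact inv_anti₀ hpos (hle.trans (le_csSup hb ⟨Λ Z, (hΛμ Z).trans hZ, rfl⟩))
  -- Finite-dimensionality excludes the remaining case, but it needs no separate argument: the real
  -- supremum of an unbounded set is `0`, so the left-hand side is `0⁻¹ = 0`.
  · have h0 : dualNormF νo.toFun φ = 0 := Real.sSup_of_not_bddAbove hb
    rw [h0, inv_zero]
    exact (inv_pos.mpr hpos).le
end
end

section
/- (Theorem 2, achievability direction: one-shot distillation protocol) Let ρ be a state on H_in, φ a pure state on H_out, and ε ∈ [0,1). If ‖φ‖_μ ≤ inf{d_ħ^ε(ρ‖Z) : Z ∈ T_sa(H_in), ‖Z‖_μ ≤ 1}, then there exists a linear map Λ ∈ O_μ such that ‖Λ(ρ) − φ‖₁ ≤ ε. -/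
/-!
The map has the measure-and-prepare form `Λ X = g X • φ`, with `g` a real linear functional such
that `|g X| ≤ ‖X‖₁`, `|g X| ≤ ‖X‖_μ / ‖φ‖_μ` and `1 - ε ≤ g ρ`.  Since `‖c • φ‖₁ = |c|` and
`‖c • φ‖_μ = |c| ‖φ‖_μ`, the first two bounds put `Λ` in `O_μ`; and `Λ ρ - φ = (g ρ - 1) • φ` with
`1 - ε ≤ g ρ ≤ ‖ρ‖₁ = 1`, which gives the error bound.

Such a `g` comes from Hahn–Banach (`exists_functional`), which plays the role of a minimax theorem.
The value `q Z = inf ⟨Q, Z⟩` over feasible tests `Q` is positively homogeneous and superadditive,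
and the hypothesis on `φ` says `q Z ≤ ‖Z‖_μ / ‖φ‖_μ` for all `Z` (`sInf_dhSet_le`).  Hence
`N (X, Y) = ‖Y‖_μ / ‖φ‖_μ - q (-X)` is sublinear on pairs and nonnegative on the antidiagonal
`(X, -X)`, so the zero functional extends from the antidiagonal to some linear `G ≤ N`.  The
functional `g X = G (X, 0) = G (0, X)` is bounded by both summands of `N`: the second gives
`g X ≤ ‖X‖_μ / ‖φ‖_μ`, the first `g X ≤ -q (-X)`, which yields the trace-norm bound and, at
`X = -ρ`, the bound `1 - ε ≤ g ρ`.
-/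

open scoped ComplexOrder
open Filter

noncomputable section

variable {ι κ : Type} [Fintype ι] [DecidableEq ι] [Fintype κ] [DecidableEq κ]

/-- A test `-1 ≤ Q ≤ 1` satisfies `|⟨Q, X⟩| ≤ ‖X‖₁`: in an eigenbasis of `X`, the pairing is the sum
of the eigenvalues weighted by diagonal entries of `Q`, which lie in `[-1, 1]`. -/
lemma abs_hip_le_trNorm_s3 (Q X : HMat ι) (h1 : loew (-(1 : Matrix ι ι ℂ)) Q.1) (h2 : loew Q.1 1) :
    |hip Q X| ≤ trNorm X := by
  set U : Matrix ι ι ℂ := ((herm X).eigenvectorUnitary : Matrix ι ι ℂ) with hU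
  have hUU : U.conjTranspose * U = 1 := Unitary.coe_star_mul_self (herm X).eigenvectorUnitary
  set B := U.conjTranspose * Q.1 * U with hB
  have hX : X.1 = U * Matrix.diagonal (fun i => (((herm X).eigenvalues i : ℝ) : ℂ))
      * U.conjTranspose := by
    have := (herm X).spectral_theorem
    rw [Unitary.conjStarAlgAut_apply] at this
    exact this
  have hpair : hip Q X = ∑ i, (B i i).re * (herm X).eigenvalues i := by
    unfold hip
    have : Matrix.trace (Q.1 * X.1) =
        Matrix.trace (B * Matrix.diagonal (fun i => (((herm X).eigenvalues i : ℝ) : ℂ))) := by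
      conv_lhs => rw [hX]
      rw [← mul_assoc, Matrix.trace_mul_comm, ← mul_assoc, ← mul_assoc]
    rw [this]
    simp [Matrix.trace, Matrix.mul_diagonal]
  have hBi : ∀ i, |(B i i).re| ≤ 1 := by
    intro i
    have e1 := (h1.conjTranspose_mul_mul_same U).diag_nonneg (i := i)
    have e2 := (h2.conjTranspose_mul_mul_same U).diag_nonneg (i := i)
    have f1 : U.conjTranspose * (Q.1 - -1) * U = B + 1 := by
      rw [sub_neg_eq_add, mul_add, add_mul, mul_one, hUU]
    have f2 : U.conjTranspose * (1 - Q.1) * U = 1 - B := by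
      rw [mul_sub, sub_mul, mul_one, hUU]
    rw [f1] at e1
    rw [f2] at e2
    have e1' := (Complex.le_def.1 e1).1
    have e2' := (Complex.le_def.1 e2).1
    simp at e1' e2'
    rw [abs_le]; constructor <;> linarith
  rw [hpair]
  refine (Finset.abs_sum_le_sum_abs _ _).trans (Finset.sum_le_sum fun i _ => ?_)
  rw [abs_mul]
  exact mul_le_of_le_one_left (abs_nonneg _) (hBi i)

lemma trNorm_state (ρ : HMat ι) (hρ : IsState ρ) : trNorm ρ = 1 := by
  have h := (herm ρ).trace_eq_sum_eigenvalues
  rw [hρ.2] at h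
  have h' : (1 : ℝ) = ∑ i, (herm ρ).eigenvalues i := by
    have := congrArg Complex.re h
    simpa using this
  rw [h']
  exact Finset.sum_congr rfl fun i _ => abs_of_nonneg (hρ.1.eigenvalues_nonneg i)

/-- Every eigenvalue `l` of `c • φ` satisfies `l² = c l`, and the eigenvalues sum to `c`. -/
lemma trNorm_smul_pure (φ : HMat ι) (hφ : IsPureState φ) (c : ℝ) : trNorm (c • φ) = |c| := by
  set A := c • φ with hA
  have hA1 : A.1 = c • φ.1 := rfl
  have hsq : ∀ i, (herm A).eigenvalues i * (herm A).eigenvalues i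
      = c * (herm A).eigenvalues i := by
    intro i
    have hv := (herm A).mulVec_eigenvectorBasis i
    set v := (herm A).eigenvectorBasis i with hvdef
    set l := (herm A).eigenvalues i
    have hAA : A.1 * A.1 = c • A.1 := by
      rw [hA1, smul_mul_smul_comm, hφ.2, smul_smul]
    have h1 : (A.1 * A.1).mulVec v = (l * l) • (v : ι → ℂ) := by
      rw [← Matrix.mulVec_mulVec, hv, Matrix.mulVec_smul, hv, smul_smul]
    have h2 : (A.1 * A.1).mulVec v = (c * l) • (v : ι → ℂ) := by
      rw [hAA, Matrix.smul_mulVec, hv, smul_smul]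
    have hv0 : (v : ι → ℂ) ≠ 0 := by
      intro h0
      have : v = 0 := by ext j; exact congrFun h0 j
      have hn := (herm A).eigenvectorBasis.orthonormal.1 i
      rw [← hvdef, this, norm_zero] at hn
      exact zero_ne_one hn
    exact smul_left_injective ℝ hv0 (h1.symm.trans h2)
  have hsum : ∑ i, (herm A).eigenvalues i = c := by
    have htr : A.1.trace = c • 1 := by rw [hA1, Matrix.trace_smul, hφ.1.2]
    have := congrArg Complex.re (htr.symm.trans (herm A).trace_eq_sum_eigenvalues)
    simpa using this.symm
  unfold trNorm
  rcases eq_or_ne c 0 with hc | hc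
  · rw [hc, abs_zero]
    refine Finset.sum_eq_zero fun i _ => ?_
    have := hsq i
    rw [hc, zero_mul] at this
    rw [mul_self_eq_zero.1 this, abs_zero]
  · have hc' : 0 < |c| := abs_pos.2 hc
    have : |c| * ∑ i, |(herm A).eigenvalues i| = |c| * |c| := by
      calc |c| * ∑ i, |(herm A).eigenvalues i| = ∑ i, c * (herm A).eigenvalues i := by
            rw [Finset.mul_sum]
            refine Finset.sum_congr rfl fun i _ => ?_
            rw [← abs_mul, ← hsq i, abs_mul_self]
        _ = |c| * |c| := by rw [← Finset.mul_sum, hsum, abs_mul_abs_self]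
    exact mul_left_cancel₀ hc'.ne' this

lemma hip_add (Q X Y : HMat ι) : hip Q (X + Y) = hip Q X + hip Q Y := by
  simp [hip, mul_add]

lemma hip_smul (Q X : HMat ι) (t : ℝ) : hip Q (t • X) = t * hip Q X := by
  simp [hip]

/-- The test `Q = 1` is feasible. -/
lemma dhSet_nonempty (ρ : HMat ι) (hρ : IsState ρ) (ε : ℝ) (hε0 : 0 ≤ ε) (Z : HMat ι) :
    (dhSet ρ Z ε).Nonempty := by
  refine ⟨_, 1, ?_, ?_, ?_, rfl⟩
  · have : (1 : Matrix ι ι ℂ) - -1 = 1 + 1 := sub_neg_eq_add _ _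
    change ((1 : Matrix ι ι ℂ) - -1).PosSemidef
    rw [this]
    exact Matrix.PosSemidef.one.add Matrix.PosSemidef.one
  · change ((1 : Matrix ι ι ℂ) - 1).PosSemidef
    rw [sub_self]
    exact Matrix.PosSemidef.zero
  · have : hip 1 ρ = 1 := by
      unfold hip
      rw [selfAdjoint.val_one, one_mul, hρ.2, Complex.one_re]
    linarith

lemma neg_trNorm_mem_lowerBounds (ρ Z : HMat ι) (ε : ℝ) :
    -trNorm Z ∈ lowerBounds (dhSet ρ Z ε) := by
  rintro r ⟨Q, h1, h2, -, rfl⟩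
  exact (abs_le.1 (abs_hip_le_trNorm_s3 Q Z h1 h2)).1

lemma sInf_dhSet_add (ρ : HMat ι) (hρ : IsState ρ) (ε : ℝ) (hε0 : 0 ≤ ε) (Z W : HMat ι) :
    sInf (dhSet ρ Z ε) + sInf (dhSet ρ W ε) ≤ sInf (dhSet ρ (Z + W) ε) := by
  refine le_csInf (dhSet_nonempty ρ hρ ε hε0 _) ?_
  rintro r ⟨Q, h1, h2, h3, rfl⟩
  rw [hip_add]
  exact add_le_add (csInf_le ⟨_, neg_trNorm_mem_lowerBounds ρ Z ε⟩ ⟨Q, h1, h2, h3, rfl⟩)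
    (csInf_le ⟨_, neg_trNorm_mem_lowerBounds ρ W ε⟩ ⟨Q, h1, h2, h3, rfl⟩)

lemma sInf_dhSet_zero (ρ : HMat ι) (hρ : IsState ρ) (ε : ℝ) (hε0 : 0 ≤ ε) :
    sInf (dhSet ρ 0 ε) = 0 := by
  have : dhSet ρ 0 ε = {0} := by
    refine Set.Nonempty.subset_singleton_iff (dhSet_nonempty ρ hρ ε hε0 0) |>.1 ?_
    rintro r ⟨Q, -, -, -, rfl⟩
    simp [hip]
  rw [this, csInf_singleton]

open scoped Pointwise in
lemma sInf_dhSet_smul (ρ Z : HMat ι) (ε t : ℝ) (ht : 0 ≤ t) :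
    sInf (dhSet ρ (t • Z) ε) = t * sInf (dhSet ρ Z ε) := by
  have : dhSet ρ (t • Z) ε = t • dhSet ρ Z ε := by
    ext r
    rw [Set.mem_smul_set]
    constructor
    · rintro ⟨Q, h1, h2, h3, rfl⟩
      exact ⟨_, ⟨Q, h1, h2, h3, rfl⟩, (hip_smul Q Z t).symm⟩
    · rintro ⟨_, ⟨Q, h1, h2, h3, rfl⟩, rfl⟩
      exact ⟨Q, h1, h2, h3, (hip_smul Q Z t).symm⟩
  rw [this, Real.sInf_smul_of_nonneg ht, smul_eq_mul]

lemma ResourceNorm.map_zero (ν : ResourceNorm ι) : ν.toFun 0 = 0 := by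
  have := ν.smul' 0 0
  rwa [zero_smul, abs_zero, zero_mul] at this

lemma ResourceNorm.map_neg (ν : ResourceNorm ι) (X : HMat ι) : ν.toFun (-X) = ν.toFun X := by
  rw [← neg_one_smul ℝ X, ν.smul', abs_neg, abs_one, one_mul]

lemma ResourceNorm.nonneg (ν : ResourceNorm ι) (X : HMat ι) : 0 ≤ ν.toFun X := by
  have h := ν.add_le' X (-X)
  rw [add_neg_cancel, ν.map_zero, ν.map_neg] at h
  linarith

/-- The hypothesis of the theorem, freed from the normalization `‖Z‖_μ ≤ 1` and from the extended
reals: `inf ⟨Q, Z⟩ ≤ ‖Z‖_μ / m` for every `Z`. -/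
lemma sInf_dhSet_le (ν : ResourceNorm ι) (ρ : HMat ι) (hρ : IsState ρ) (ε : ℝ) (hε0 : 0 ≤ ε)
    (m : ℝ) (hm : 0 < m)
    (h : (m : EReal) ≤ ⨅ Z ∈ {Z : HMat ι | ν.toFun Z ≤ 1}, dEmanc ρ Z ε) (Z : HMat ι) :
    sInf (dhSet ρ Z ε) ≤ m⁻¹ * ν.toFun Z := by
  have key : ∀ Z, ν.toFun Z ≤ 1 → sInf (dhSet ρ Z ε) ≤ m⁻¹ := by
    intro Z hZ
    have hZ' := h.trans (iInf₂_le Z hZ)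
    unfold dEmanc at hZ'
    split_ifs at hZ' with hpos
    · exact (le_inv_comm₀ hm hpos).1 (EReal.coe_le_coe_iff.1 hZ')
    · exact (not_lt.1 hpos).trans (inv_nonneg.2 hm.le)
  rcases (ν.nonneg Z).eq_or_lt with hz | hz
  · rw [ν.eq_zero' Z hz.symm, sInf_dhSet_zero ρ hρ ε hε0, ν.map_zero, mul_zero]
  · set s := ν.toFun Z with hs
    have hk := key (s⁻¹ • Z) (by
      rw [ν.smul', abs_of_pos (inv_pos.2 hz), ← hs, inv_mul_cancel₀ hz.ne'])
    rw [sInf_dhSet_smul ρ Z ε _ (inv_pos.2 hz).le] at hk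
    rwa [inv_mul_le_iff₀ hz, mul_comm] at hk

/-- The Hahn–Banach step: it replaces a minimax exchange of the test `Q` and the witness `Z`. -/
lemma exists_functional (ν : ResourceNorm ι) (ρ : HMat ι) (hρ : IsState ρ) (ε : ℝ) (hε0 : 0 ≤ ε)
    (m : ℝ) (hm : 0 < m)
    (h : (m : EReal) ≤ ⨅ Z ∈ {Z : HMat ι | ν.toFun Z ≤ 1}, dEmanc ρ Z ε) :
    ∃ g : HMat ι →ₗ[ℝ] ℝ, (∀ X, |g X| ≤ trNorm X) ∧ (∀ X, |g X| ≤ m⁻¹ * ν.toFun X) ∧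
      1 - ε ≤ g ρ := by
  have hne := dhSet_nonempty ρ hρ ε hε0
  let N : HMat ι × HMat ι → ℝ := fun p => m⁻¹ * ν.toFun p.2 - sInf (dhSet ρ (-p.1) ε)
  -- The zero functional on the antidiagonal `{(X, -X)}`.
  let J : HMat ι →ₗ[ℝ] HMat ι × HMat ι := LinearMap.prod LinearMap.id (-LinearMap.id)
  let f : (HMat ι × HMat ι) →ₗ.[ℝ] ℝ := ⟨LinearMap.range J, 0⟩
  obtain ⟨G, hG1, hG2⟩ := exists_extension_of_le_sublinear f N
    (by
      rintro c hc ⟨X, Y⟩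
      simp only [N, Prod.smul_mk]
      rw [ν.smul', abs_of_pos hc, ← smul_neg, sInf_dhSet_smul ρ _ ε c hc.le]
      ring)
    (by
      rintro ⟨X, Y⟩ ⟨X', Y'⟩
      simp only [N, Prod.mk_add_mk]
      have h1 := mul_le_mul_of_nonneg_left (ν.add_le' Y Y') (inv_pos.2 hm).le
      have h2 := sInf_dhSet_add ρ hρ ε hε0 (-X) (-X')
      rw [show -X + -X' = -(X + X') by abel] at h2
      linarith)
    (by
      rintro ⟨_, X, rfl⟩
      have := sInf_dhSet_le ν ρ hρ ε hε0 m hm h (-X)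
      change (0 : ℝ) ≤ m⁻¹ * ν.toFun (-X) - sInf (dhSet ρ (-X) ε)
      linarith)
  have hswap : ∀ X, G (X, 0) = G (0, X) := by
    intro X
    have h0 : G (X, -X) = 0 := hG1 ⟨J X, X, rfl⟩
    have : ((X, 0) : HMat ι × HMat ι) = (X, -X) + (0, X) := by simp
    rw [this, map_add, h0, zero_add]
  let g : HMat ι →ₗ[ℝ] ℝ := G.comp (LinearMap.inl ℝ (HMat ι) (HMat ι))
  have hg1 : ∀ X, g X ≤ -sInf (dhSet ρ (-X) ε) := by
    intro X
    have : G (X, 0) ≤ m⁻¹ * ν.toFun 0 - sInf (dhSet ρ (-X) ε) := hG2 (X, 0)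
    rwa [ν.map_zero, mul_zero, zero_sub] at this
  have hg2 : ∀ X, g X ≤ m⁻¹ * ν.toFun X := by
    intro X
    have : G (0, X) ≤ m⁻¹ * ν.toFun X - sInf (dhSet ρ (-0) ε) := hG2 (0, X)
    rw [neg_zero, sInf_dhSet_zero ρ hρ ε hε0, sub_zero, ← hswap] at this
    exact this
  have hneg : ∀ X, -g X ≤ -sInf (dhSet ρ X ε) := by
    intro X
    have := hg1 (-X)
    rwa [map_neg, neg_neg] at this
  refine ⟨g, fun X => abs_le.2 ⟨?_, ?_⟩, fun X => abs_le'.2 ⟨hg2 X, ?_⟩, ?_⟩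
  · have h2 := le_csInf (hne X) (neg_trNorm_mem_lowerBounds ρ X ε)
    linarith [hneg X]
  · -- Bounding `⟨Q, -X⟩` through `⟨Q, X⟩` avoids computing the trace norm of `-X`.
    refine (hg1 X).trans (neg_le.1 (le_csInf (hne _) ?_))
    rintro r ⟨Q, h1, h2, -, rfl⟩
    have h3 := (abs_le.1 (abs_hip_le_trNorm_s3 Q X h1 h2)).2
    rw [← neg_one_smul ℝ X, hip_smul]
    linarith
  · have := hg2 (-X)
    rwa [map_neg, ν.map_neg] at this
  · have h2 : 1 - ε ≤ sInf (dhSet ρ ρ ε) := by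
      refine le_csInf (hne _) ?_
      rintro r ⟨Q, -, -, h3, rfl⟩
      exact h3
    linarith [hneg ρ]

/-- **Theorem 2 (achievability direction: one-shot distillation protocol).**
If `‖φ‖_μ ≤ inf {d_ħ^ε(ρ‖Z) : ‖Z‖_μ ≤ 1}`, then there exists a map `Λ ∈ O_μ`
with `‖Λ(ρ) − φ‖₁ ≤ ε`. -/
theorem oneshot_distillation_achievability
    {dIn dOut : Type} [Fintype dIn] [DecidableEq dIn] [Fintype dOut] [DecidableEq dOut]
    (νi : ResourceNorm dIn) (νo : ResourceNorm dOut)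
    (ρ : HMat dIn) (hρ : IsState ρ)
    (φ : HMat dOut) (hφ : IsPureState φ)
    (ε : ℝ) (hε0 : 0 ≤ ε) (hε1 : ε < 1)
    (h : ((νo.toFun φ : ℝ) : EReal) ≤
      ⨅ Z ∈ {Z : HMat dIn | νi.toFun Z ≤ 1}, dEmanc ρ Z ε) :
    ∃ Λ : HMat dIn →ₗ[ℝ] HMat dOut, MemO νi νo Λ ∧ trNorm (Λ ρ - φ) ≤ ε := by
  have hm : 0 < νo.toFun φ := zero_lt_one.trans_le (νo.one_le_state' φ hφ.1)
  obtain ⟨g, hg1, hg2, hg3⟩ := exists_functional νi ρ hρ ε hε0 _ hm h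
  refine ⟨g.smulRight φ, ⟨fun X => ?_, fun X => ?_⟩, ?_⟩
  · rw [LinearMap.smulRight_apply, trNorm_smul_pure φ hφ]
    exact hg1 X
  · rw [LinearMap.smulRight_apply, νo.smul', mul_comm, ← le_inv_mul_iff₀ hm]
    exact hg2 X
  · have he : g.smulRight φ ρ - φ = (g ρ - 1) • φ := by
      rw [LinearMap.smulRight_apply, sub_smul, one_smul]
    have hle := (abs_le.1 (hg1 ρ)).2
    rw [trNorm_state ρ hρ] at hle
    rw [he, trNorm_smul_pure φ hφ, abs_le]
    constructor <;> linarith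

end
end
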